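/- Let U ∈ C²([1,∞)) solve (1−ρ²)U''(ρ) + (2/ρ − 4ρ)U'(ρ) − 2U(ρ) + U(ρ)³ = 0 for all ρ > 1, with U(1) > √2. Then the function g(ρ) = ρ⁴ U(ρ) U'(ρ) − (ρ³/6)(U(ρ)² − 2) satisfies g(ρ) > 0 for all ρ ≥ 1. -/

import Mathlib

/-!
Put `w = U² - 2`, so that `g = ρ⁴ w' / 2 - ρ³ w / 6`. Letting `ρ ↓ 1` in the equation gives
`U'(1) = U(1) w(1) / 2`, hence `g(1) = w(1) (U(1)² / 2 - 1/6) > 0`. If `g` were not positive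
everywhere, it would have a first zero `ρ₀ > 1`. Where `g ≥ 0` one has `3 ρ w' ≥ w`, so `w³ / ρ` is
nondecreasing on `[1, ρ₀]`, and `w(ρ₀) > 0`. At `ρ₀` the relation `6 ρ U U' = w` and the equation
give
`ρ² (ρ² - 1) U U'' = w (1/3 + ρ² (4/3 + w)) > 0` and
`g' = ρ² w / 9 + ρ⁴ U'² + ρ⁴ U U'' > 0`,
whereas the derivative at a first zero approached from positive values is at most `0`.
-/

open Set Filter Topology

/-- The derivative of `g` is positive at a zero of `g` with `U² > 2`; here `u, v, a` stand for
`U, U', U''` at the point `r`. -/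
lemma g_deriv_pos_of_zero {r u v a : ℝ} (hr : 1 < r) (hw : 0 < u ^ 2 - 2)
    (hz : r ^ 4 * u * v - r ^ 3 / 6 * (u ^ 2 - 2) = 0)
    (he : (1 - r ^ 2) * a + (2 / r - 4 * r) * v - 2 * u + u ^ 3 = 0) :
    0 < 4 * r ^ 3 * u * v + r ^ 4 * (v ^ 2 + u * a) - r ^ 2 / 2 * (u ^ 2 - 2)
      - r ^ 3 / 6 * (2 * u * v) := by
  have hr0 : 0 < r := by linarith
  have huv : 6 * (r * (u * v)) = u ^ 2 - 2 := by
    have h : r ^ 3 * (6 * (r * (u * v)) - (u ^ 2 - 2)) = 0 := by linear_combination 6 * hz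
    have := (mul_eq_zero.mp h).resolve_left (by positivity)
    linarith
  have he' : (r ^ 2 - 1) * r * a = (2 - 4 * r ^ 2) * v + r * u * (u ^ 2 - 2) := by
    field_simp at he
    linear_combination -he
  have hua : 0 < u * a := by
    have h : (r ^ 2 * (r ^ 2 - 1)) * (u * a)
        = (u ^ 2 - 2) * (1 / 3 + r ^ 2 * (4 / 3 + (u ^ 2 - 2))) := by
      linear_combination r * u * he' + (2 - 4 * r ^ 2) / 6 * huv
    have h1 : 0 < r ^ 2 * (r ^ 2 - 1) := mul_pos (by positivity) (by nlinarith)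
    refine pos_of_mul_pos_right ?_ h1.le
    rw [h]
    positivity
  have h : 4 * r ^ 3 * u * v + r ^ 4 * (v ^ 2 + u * a) - r ^ 2 / 2 * (u ^ 2 - 2)
      - r ^ 3 / 6 * (2 * u * v) = r ^ 2 * (u ^ 2 - 2) / 9 + r ^ 4 * v ^ 2 + r ^ 4 * (u * a) := by
    linear_combination (11 / 18) * r ^ 2 * huv
  rw [h]
  positivity

/-- A function `f` that is at least `f r` at every point of an interval to the left of `r` has
nonpositive derivative at `r`. -/
lemma deriv_nonpos_of_left {f : ℝ → ℝ} {d s r : ℝ} (hsr : s < r) (hd : HasDerivAt f d r)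
    (h : ∀ x ∈ Ico s r, f r ≤ f x) : d ≤ 0 := by
  have ht : Tendsto (slope f r) (𝓝[<] r) (𝓝 d) :=
    (hasDerivAt_iff_tendsto_slope.mp hd).mono_left
      (nhdsWithin_mono _ fun x hx => ne_of_lt hx)
  refine le_of_tendsto ht ?_
  filter_upwards [Ico_mem_nhdsLT hsr] with x hx
  rw [slope_def_field]
  exact div_nonpos_of_nonneg_of_nonpos (by linarith [h x hx]) (by linarith [hx.2])

/-- The positivity of `g`, with `V` and `A` playing the roles of `U'` and `U''`, continuous up to
the endpoint `1`. -/
lemma g_pos_aux {U V A : ℝ → ℝ} (hUc : ContinuousOn U (Ici 1)) (hVc : ContinuousOn V (Ici 1))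
    (hAc : ContinuousOn A (Ici 1))
    (hU : ∀ r, 1 < r → HasDerivAt U (V r) r) (hV : ∀ r, 1 < r → HasDerivAt V (A r) r)
    (he : ∀ r : ℝ, 1 < r →
      (1 - r ^ 2) * A r + (2 / r - 4 * r) * V r - 2 * U r + (U r) ^ 3 = 0)
    (hb : Real.sqrt 2 < U 1) :
    ∀ r : ℝ, 1 ≤ r → 0 < r ^ 4 * U r * V r - r ^ 3 / 6 * ((U r) ^ 2 - 2) := by
  have hw1 : 0 < U 1 ^ 2 - 2 := by
    have := (Real.sqrt_lt' (lt_trans' hb (by positivity))).mp hb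
    linarith
  -- Both sides of the equation are continuous on `[1, ∞)`, so it extends to `ρ = 1`.
  have he1 : (1 - (1:ℝ) ^ 2) * A 1 + (2 / 1 - 4 * 1) * V 1 - 2 * U 1 + (U 1) ^ 3 = 0 := by
    have hF : ContinuousOn (fun r : ℝ => (1 - r ^ 2) * A r + (2 / r - 4 * r) * V r - 2 * U r
        + (U r) ^ 3) (Ici 1) := by
      have hdiv : ContinuousOn (fun r : ℝ => 2 / r) (Ici 1) :=
        continuousOn_const.div continuousOn_id fun x hx =>
          (lt_of_lt_of_le one_pos (mem_Ici.mp hx)).ne'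
      fun_prop
    have ht := (hF 1 self_mem_Ici).mono Ioi_subset_Ici_self
    refine tendsto_nhds_unique ht (tendsto_const_nhds.congr' ?_)
    filter_upwards [self_mem_nhdsWithin] with x hx
    exact (he x hx).symm
  set g : ℝ → ℝ := fun r => r ^ 4 * U r * V r - r ^ 3 / 6 * ((U r) ^ 2 - 2) with hg
  have hgc : ContinuousOn g (Ici 1) := by fun_prop
  have hg1 : 0 < g 1 := by
    have hV1 : V 1 = U 1 * (U 1 ^ 2 - 2) / 2 := by linarith
    have : g 1 = (U 1 ^ 2 - 2) * ((U 1 ^ 2 - 2) / 2 + 5 / 6) := by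
      simp only [hg, hV1]; ring
    rw [this]
    positivity
  intro r hr
  by_contra! hneg
  have hK : IsCompact (Icc 1 r ∩ g ⁻¹' Iic 0) :=
    isCompact_Icc.of_isClosed_subset
      ((hgc.mono Icc_subset_Ici_self).preimage_isClosed_of_isClosed isClosed_Icc isClosed_Iic)
      inter_subset_left
  obtain ⟨s, ⟨⟨hs1, hsr⟩, hgs⟩, hmin⟩ := hK.exists_isLeast ⟨r, ⟨hr, le_rfl⟩, hneg⟩
  have hgs : g s ≤ 0 := hgs
  have hs : 1 < s := by
    rcases hs1.lt_or_eq with h | h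
    · exact h
    · rw [← h] at hgs
      linarith
  have hpos : ∀ x ∈ Ico 1 s, 0 < g x := by
    intro x hx
    by_contra! h
    exact absurd (hmin ⟨⟨hx.1, hx.2.le.trans hsr⟩, h⟩) (not_le.mpr hx.2)
  have hgs0 : g s = 0 := by
    refine le_antisymm hgs ?_
    have ht : Tendsto g (𝓝[<] s) (𝓝 (g s)) :=
      ((hgc s hs.le).continuousAt (Ici_mem_nhds hs)).mono_left nhdsWithin_le_nhds
    refine ge_of_tendsto ht ?_
    filter_upwards [Ico_mem_nhdsLT hs] with x hx
    exact (hpos x hx).le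
  -- The cube replaces `w ρ^(-1/3)`, the quantity that `3 ρ w' ≥ w` makes monotone.
  have hmono : MonotoneOn (fun x : ℝ => (U x ^ 2 - 2) ^ 3 / x) (Icc 1 s) := by
    refine monotoneOn_of_hasDerivWithinAt_nonneg (convex_Icc 1 s)
      (f' := fun x => (3 * (U x ^ 2 - 2) ^ 2 * (2 * U x * V x) * x
        - (U x ^ 2 - 2) ^ 3 * 1) / x ^ 2) ?_ ?_ ?_
    · have hUc' : ContinuousOn U (Icc 1 s) := hUc.mono Icc_subset_Ici_self
      exact ContinuousOn.div (by fun_prop) continuousOn_id fun x hx =>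
        (lt_of_lt_of_le one_pos hx.1).ne'
    · intro x hx
      rw [interior_Icc] at hx
      have hx0 : x ≠ 0 := (one_pos.trans hx.1).ne'
      have := ((((hU x hx.1).pow 2).sub_const 2).pow 3).div (hasDerivAt_id x) hx0
      refine (this.congr_deriv ?_).hasDerivWithinAt
      simp
    · intro x hx
      rw [interior_Icc] at hx
      have hx0 : 0 < x := one_pos.trans hx.1
      have hgx : 0 < g x := hpos x ⟨hx.1.le, hx.2⟩
      have h1 : 0 < 6 * (x * (U x * V x)) - (U x ^ 2 - 2) := by
        refine pos_of_mul_pos_right (a := x ^ 3 / 6) ?_ (by positivity)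
        have : x ^ 3 / 6 * (6 * (x * (U x * V x)) - (U x ^ 2 - 2)) = g x := by
          simp only [hg]; ring
        rwa [this]
      have h2 : 3 * (U x ^ 2 - 2) ^ 2 * (2 * U x * V x) * x - (U x ^ 2 - 2) ^ 3 * 1
          = (U x ^ 2 - 2) ^ 2 * (6 * (x * (U x * V x)) - (U x ^ 2 - 2)) := by ring
      simp only [h2]
      positivity
  have hws : 0 < U s ^ 2 - 2 := by
    have h := hmono (left_mem_Icc.mpr hs.le) (right_mem_Icc.mpr hs.le) hs.le
    have h3 : 0 < (U s ^ 2 - 2) ^ 3 / s :=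
      lt_of_lt_of_le (div_pos (pow_pos hw1 3) one_pos) h
    have h4 : 0 < (U s ^ 2 - 2) ^ 3 := (div_pos_iff_of_pos_right (by linarith)).mp h3
    exact (Odd.pow_pos_iff (by decide)).mp h4
  have hder : HasDerivAt g (4 * s ^ 3 * U s * V s + s ^ 4 * (V s ^ 2 + U s * A s)
      - s ^ 2 / 2 * (U s ^ 2 - 2) - s ^ 3 / 6 * (2 * U s * V s)) s := by
    have := (((hasDerivAt_pow 4 s).mul (hU s hs)).mul (hV s hs)).sub
      (((hasDerivAt_pow 3 s).div_const 6).mul (((hU s hs).pow 2).sub_const 2))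
    refine this.congr_deriv ?_
    simp
    ring
  have hle := deriv_nonpos_of_left hs hder fun x hx => hgs0.le.trans (hpos x hx).le
  exact absurd (g_deriv_pos_of_zero hs hws hgs0 (he s hs)) (not_lt.mpr hle)

/-- For a `C²` solution on `[1,∞)` of the profile equation with `U(1) > √2`, the
function `g(ρ) = ρ⁴ U U' - (ρ³/6)(U² - 2)` is positive on `[1,∞)`. -/
theorem cubic_wave_g_positive (U : ℝ → ℝ)
    (hU : ContDiffOn ℝ 2 U (Set.Ici 1))
    (heq : ∀ ρ : ℝ, 1 < ρ →
      (1 - ρ ^ 2) * deriv (deriv U) ρ + (2 / ρ - 4 * ρ) * deriv U ρ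
        - 2 * U ρ + (U ρ) ^ 3 = 0)
    (hb : Real.sqrt 2 < U 1) :
    ∀ ρ ∈ Set.Ici (1 : ℝ),
      0 < ρ ^ 4 * U ρ * derivWithin U (Set.Ici 1) ρ
        - ρ ^ 3 / 6 * ((U ρ) ^ 2 - 2) := by
  have hV : ContDiffOn ℝ 1 (derivWithin U (Ici 1)) (Ici 1) :=
    hU.derivWithin (uniqueDiffOn_Ici 1) (by norm_num)
  have hA : ContinuousOn (derivWithin (derivWithin U (Ici 1)) (Ici 1)) (Ici 1) :=
    hV.continuousOn_derivWithin (uniqueDiffOn_Ici 1) le_rfl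
  have hdU : ∀ r : ℝ, 1 < r → derivWithin U (Ici 1) r = deriv U r := fun r hr =>
    derivWithin_of_mem_nhds (Ici_mem_nhds hr)
  have hdV : ∀ r : ℝ, 1 < r →
      derivWithin (derivWithin U (Ici 1)) (Ici 1) r = deriv (deriv U) r := by
    intro r hr
    rw [derivWithin_of_mem_nhds (Ici_mem_nhds hr)]
    refine EventuallyEq.deriv_eq ?_
    filter_upwards [Ioi_mem_nhds hr] with x hx
    exact hdU x hx
  refine fun ρ hρ => g_pos_aux hU.continuousOn hV.continuousOn hA ?_ ?_ ?_ hb ρ hρ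
  · intro r hr
    exact ((hU.differentiableOn (by norm_num)) r hr.le).hasDerivWithinAt.hasDerivAt
      (Ici_mem_nhds hr)
  · intro r hr
    exact ((hV.differentiableOn (by norm_num)) r hr.le).hasDerivWithinAt.hasDerivAt
      (Ici_mem_nhds hr)
  · intro r hr
    rw [hdU r hr, hdV r hr]
    exact heq r hr
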